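/- Continuity of the homogenized energy density (Proposition 3.9 of the paper): assume Assumption H and Assumption A:2T. Then the function W₀ : ℝ^{n×d} → [0,∞) is continuous. -/

import Mathlib

open MeasureTheory Filter Metric Set
open scoped Classical
open scoped ENNReal Topology Pointwise

noncomputable section

namespace StochHom

/-- `ℝ^d` with the Euclidean norm. -/
abbrev Rd (d : ℕ) : Type := EuclideanSpace ℝ (Fin d)

/-- `ℝ^n` with the Euclidean norm. -/
abbrev Rn (n : ℕ) : Type := EuclideanSpace ℝ (Fin n)

/-- The lattice `ℤ^d`. -/
abbrev Zd (d : ℕ) : Type := Fin d → ℤ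

variable {d n : ℕ}

/-- The embedding of the lattice `ℤ^d` into `ℝ^d`. -/
def toRd (z : Zd d) : Rd d := (EuclideanSpace.equiv (Fin d) ℝ).symm fun i => (z i : ℝ)

/-- The standard basis vectors `eᵢ` of `ℤ^d`. -/
def stdb (i : Fin d) : Zd d := fun j => if j = i then 1 else 0

/-- The interaction range `R = max {4√d, max_{b ∈ ℰ₀} |b|}`. -/
def irange (d : ℕ) (E0 : Finset (Zd d)) : ℝ :=
  max (4 * Real.sqrt d) (sSup ((fun b : Zd d => ‖toRd b‖) '' (E0 : Set (Zd d))))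

variable {Ω : Type*} [MeasurableSpace Ω]

/-- The energy `E₁(ω; u, ℤ^d ∩ A)`. -/
def energy1 (τ : Zd d → Ω → Ω) (E0 : Finset (Zd d)) (V : Zd d → Ω → Rn n → ℝ)
    (ω : Ω) (u : Zd d → Rn n) (A : Set (Rd d)) : ℝ :=
  ∑' z : Zd d, if toRd z ∈ A then
      ∑ b ∈ E0, V b (τ z ω) ((‖toRd b‖)⁻¹ • (u (z + b) - u z)) else 0

/-- The scaled energy `E_ε(ω; u, A)`, where a function `u : εℤ^d → ℝ^n` is identified with a
function on `ℤ^d` via `z ↦ u(εz)`, so that `∂_b^ε u (z) = (u (z+b) - u z)/(ε |b|)`. -/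
def energyE (τ : Zd d → Ω → Ω) (E0 : Finset (Zd d)) (V : Zd d → Ω → Rn n → ℝ)
    (ε : ℝ) (ω : Ω) (u : Zd d → Rn n) (A : Set (Rd d)) : ℝ :=
  ε ^ d * ∑' z : Zd d, if ε • toRd z ∈ A then
      ∑ b ∈ E0, V b (τ z ω) ((ε * ‖toRd b‖)⁻¹ • (u (z + b) - u z)) else 0

/-- The localized minimal energy `m_F(ω; A)`. -/
def mF (τ : Zd d → Ω → Ω) (E0 : Finset (Zd d)) (V : Zd d → Ω → Rn n → ℝ)
    (ω : Ω) (F : Rd d →L[ℝ] Rn n) (A : Set (Rd d)) : ℝ :=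
  ⨅ φ : {φ : Zd d → Rn n // ∀ z : Zd d, infDist (toRd z) Aᶜ ≤ irange d E0 → φ z = 0},
    energy1 τ E0 V ω (fun z => F (toRd z) + φ.1 z) A

/-- The half-open cube `[0,k)^d ⊂ ℝ^d`. -/
def cube (d k : ℕ) : Set (Rd d) := {x | ∀ i, 0 ≤ x i ∧ x i < (k : ℝ)}

/-- The homogenized energy density `W₀(F) = inf_{k ≥ 1} k⁻ᵈ E[m_F(·, [0,k)^d)]`. -/
def W0 (P : Measure Ω) (τ : Zd d → Ω → Ω) (E0 : Finset (Zd d))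
    (V : Zd d → Ω → Rn n → ℝ) (F : Rd d →L[ℝ] Rn n) : ℝ :=
  ⨅ k : {k : ℕ // 0 < k}, (((k : ℕ) : ℝ) ^ d)⁻¹ * ∫ ω, mF τ E0 V ω F (cube d k) ∂P

/-- Half-open axis-parallel box `Π_i [aᵢ, bᵢ)`. -/
def halfBox (a b : Fin d → ℝ) : Set (Rd d) := {x | ∀ i, a i ≤ x i ∧ x i < b i}

/-- Open axis-parallel box `Π_i (aᵢ, bᵢ)`. -/
def openBox (a b : Fin d → ℝ) : Set (Rd d) := {x | ∀ i, a i < x i ∧ x i < b i}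

/-- Closed axis-parallel box `Π_i [aᵢ, bᵢ]`. -/
def closedBox (a b : Fin d → ℝ) : Set (Rd d) := {x | ∀ i, a i ≤ x i ∧ x i ≤ b i}

/-- Half-open axis-parallel box with integer corners. -/
def intBox (a b : Zd d) : Set (Rd d) := {x | ∀ i, (a i : ℝ) ≤ x i ∧ x i < (b i : ℝ)}

/-- The periodic cell minimization `W^{(k)}(ω; F)`. -/
def Wper (τ : Zd d → Ω → Ω) (E0 : Finset (Zd d)) (V : Zd d → Ω → Rn n → ℝ)
    (k : ℕ) (ω : Ω) (F : Rd d →L[ℝ] Rn n) : ℝ :=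
  ⨅ φ : {φ : Zd d → Rn n // ∀ z z' : Zd d, φ (z + k • z') = φ z},
    ((k : ℝ) ^ d)⁻¹ * energy1 τ E0 V ω (fun z => F (toRd z) + φ.1 z) (cube d k)

/-!
Given an almost minimiser of `m_{F'}` on a cube of side `k`, tile the bulk of a cube of side
`(t + 4) m k` by `(t m)^d` translates of it and interpolate from `F'` to `F` in the remaining
boundary shell by a cut-off of width comparable to `m k`. The difference quotients in the shell stay
below `‖F‖ + (1 + √d (t + 4)) ‖F' - F‖`, uniformly in `k`, so for `F` close to `F'` the shell costs
at most its volume fraction `1 - (t / (t + 4))^d` times a constant `C`. By stationarity this yields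
`W₀(F) ≤ W₀(F') + (1 - (t / (t + 4))^d) C`, where `F` and `F'` may be exchanged; let `t → ∞`.
-/

open scoped NNReal

section Lattice

@[simp]
lemma toRd_apply (z : Zd d) (i : Fin d) : toRd z i = z i := rfl

@[simp]
lemma toRd_zero : toRd (0 : Zd d) = 0 := by
  ext i; simp

lemma toRd_add (z w : Zd d) : toRd (z + w) = toRd z + toRd w := by
  ext i; simp

lemma norm_toRd_pos {z : Zd d} (hz : z ≠ 0) : 0 < ‖toRd z‖ := by
  obtain ⟨i, hi⟩ := Function.ne_iff.1 hz
  refine norm_pos_iff.2 fun h => hi ?_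
  simpa using congrArg (fun x : Rd d => x i) h

lemma dist_toRd_add (z w : Zd d) : dist (toRd (z + w)) (toRd z) = ‖toRd w‖ := by
  rw [toRd_add, dist_self_add_left]

lemma norm_toRd_le_irange {E0 : Finset (Zd d)} {b : Zd d} (hb : b ∈ E0) :
    ‖toRd b‖ ≤ irange d E0 :=
  le_max_of_le_right (le_csSup (E0.finite_toSet.image _).bddAbove ⟨b, hb, rfl⟩)

lemma irange_nonneg (E0 : Finset (Zd d)) : 0 ≤ irange d E0 :=
  le_max_of_le_left (by positivity)

lemma norm_toRd_zero_le_irange (E0 : Finset (Zd d)) : ‖toRd (0 : Zd d)‖ ≤ irange d E0 := by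
  simpa using irange_nonneg E0

/-- The lattice points `ℤ^d ∩ [0,k)^d`. -/
def latticeCube (d k : ℕ) : Finset (Zd d) := Fintype.piFinset fun _ => Finset.Ico 0 (k : ℤ)

lemma mem_latticeCube {k : ℕ} {z : Zd d} : z ∈ latticeCube d k ↔ ∀ i, 0 ≤ z i ∧ z i < k := by
  simp [latticeCube]

lemma card_latticeCube (d k : ℕ) : (latticeCube d k).card = k ^ d := by
  simp [latticeCube]

lemma toRd_mem_cube {k : ℕ} {z : Zd d} : toRd z ∈ cube d k ↔ z ∈ latticeCube d k := by
  rw [mem_latticeCube]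
  exact forall_congr' fun i => by simp only [toRd_apply]; norm_cast

lemma norm_toRd_le_of_mem_latticeCube {k : ℕ} {z : Zd d} (hz : z ∈ latticeCube d k) :
    ‖toRd z‖ ≤ √d * k := by
  have hcoord (i : Fin d) : ‖toRd z i‖ ^ 2 ≤ (k : ℝ) ^ 2 := by
    obtain ⟨h0, hk⟩ := mem_latticeCube.1 hz i
    rw [toRd_apply, Real.norm_of_nonneg (mod_cast h0)]
    exact pow_le_pow_left₀ (mod_cast h0) (mod_cast hk.le) 2
  rw [EuclideanSpace.norm_eq]
  calc √(∑ i, ‖toRd z i‖ ^ 2) ≤ √(∑ _i : Fin d, (k : ℝ) ^ 2) :=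
        Real.sqrt_le_sqrt (Finset.sum_le_sum fun i _ => hcoord i)
    _ = √d * k := by simp [Real.sqrt_sq]

lemma compl_cube_nonempty (hd : 0 < d) (k : ℕ) : (cube d k)ᶜ.Nonempty :=
  ⟨toRd fun _ => -1, fun h => absurd (h ⟨0, hd⟩).1 (by simp)⟩

lemma le_infDist_compl_cube (hd : 0 < d) {k : ℕ} {x : Rd d} {h : ℝ}
    (hx : ∀ i, h ≤ x i ∧ x i + h ≤ k) : h ≤ infDist x (cube d k)ᶜ := by
  refine (le_infDist (compl_cube_nonempty hd k)).2 fun y hy => ?_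
  obtain ⟨i, hi⟩ : ∃ i, 0 ≤ y i → (k : ℝ) ≤ y i := by simpa [cube] using hy
  have hdist : |x i - y i| ≤ dist x y := by
    simpa [dist_eq_norm] using PiLp.norm_apply_le (x - y) i
  refine le_trans ?_ hdist
  rcases lt_or_ge (y i) 0 with hneg | hnonneg
  · exact le_abs.2 (.inl (by linarith [(hx i).1]))
  · exact le_abs.2 (.inr (by linarith [(hx i).2, hi hnonneg]))

lemma mem_vadd_latticeCube {k : ℕ} {c z : Zd d} :
    z ∈ c +ᵥ latticeCube d k ↔ z - c ∈ latticeCube d k := by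
  rw [← Finset.neg_vadd_mem_iff, vadd_eq_add, neg_add_eq_sub]

lemma disjoint_smul_vadd_latticeCube {k : ℕ} {j j' : Zd d} (hne : j ≠ j') :
    Disjoint (k • j +ᵥ latticeCube d k) (k • j' +ᵥ latticeCube d k) := by
  refine Finset.disjoint_left.2 fun z hz hz' => hne (funext fun i => ?_)
  have h := mem_latticeCube.1 (mem_vadd_latticeCube.1 hz) i
  have h' := mem_latticeCube.1 (mem_vadd_latticeCube.1 hz') i
  simp only [Pi.sub_apply, nsmul_eq_mul, Pi.mul_apply, Pi.natCast_apply] at h h'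
  rcases lt_trichotomy (j i) (j' i) with hlt | heq | hgt
  · nlinarith
  · exact heq
  · nlinarith

end Lattice

section Packing

variable {ι : Type*}

/-- The union of the translated cubes `c j + ℤ^d ∩ [0,k)^d`, `j ∈ J`. -/
def cells (k : ℕ) (J : Finset ι) (c : ι → Zd d) : Finset (Zd d) :=
  J.biUnion fun j => c j +ᵥ latticeCube d k

/-- The translated cubes `c j + ℤ^d ∩ [0,k)^d`, `j ∈ J`, are pairwise disjoint and lie in
`[0,K)^d` at distance at least `2R + s` from its complement. The width `R` next to the boundary is
where competitors vanish, `s` is left for a cut-off function, and the second `R` keeps all bonds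
that start in a cell inside the region where the cut-off equals `1`. -/
structure IsInteriorPacking (E0 : Finset (Zd d)) (s : ℝ≥0) (K k : ℕ) (J : Finset ι)
    (c : ι → Zd d) : Prop where
  pairwiseDisjoint : (J : Set ι).PairwiseDisjoint fun j => c j +ᵥ latticeCube d k
  le_infDist : ∀ z ∈ cells k J c, 2 * irange d E0 + s ≤ infDist (toRd z) (cube d K)ᶜ

lemma IsInteriorPacking.irange_lt_infDist {E0 : Finset (Zd d)} {s : ℝ≥0} (hs : 0 < s) {K k : ℕ}
    {J : Finset ι} {c : ι → Zd d} (hJ : IsInteriorPacking E0 s K k J c) {z : Zd d}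
    (hz : z ∈ cells k J c) : irange d E0 < infDist (toRd z) (cube d K)ᶜ := by
  linarith [hJ.le_infDist z hz, irange_nonneg E0, NNReal.coe_pos.2 hs]

lemma IsInteriorPacking.cells_subset {E0 : Finset (Zd d)} {s : ℝ≥0} (hs : 0 < s) {K k : ℕ}
    {J : Finset ι} {c : ι → Zd d} (hJ : IsInteriorPacking E0 s K k J c) :
    cells k J c ⊆ latticeCube d K := by
  intro z hz
  by_contra hzK
  refine ((irange_nonneg E0).trans_lt (hJ.irange_lt_infDist hs hz)).ne' ?_
  exact infDist_zero_of_mem (mt toRd_mem_cube.1 hzK)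

lemma card_cells {k : ℕ} {J : Finset ι} {c : ι → Zd d}
    (hJ : (J : Set ι).PairwiseDisjoint fun j => c j +ᵥ latticeCube d k) :
    (cells k J c).card = J.card * k ^ d := by
  simp [cells, Finset.card_biUnion hJ, card_latticeCube]

lemma sum_cells {M : Type*} [AddCommMonoid M] {k : ℕ} {J : Finset ι} {c : ι → Zd d}
    (hJ : (J : Set ι).PairwiseDisjoint fun j => c j +ᵥ latticeCube d k) (f : Zd d → M) :
    ∑ z ∈ cells k J c, f z = ∑ j ∈ J, ∑ y ∈ latticeCube d k, f (c j + y) := by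
  rw [cells, Finset.sum_biUnion hJ]
  exact Finset.sum_congr rfl fun j _ => Finset.sum_image (add_right_injective (c j)).injOn

/-- The cells `j ∈ {m, …, m + N - 1}^d` of the grid that divides a cube into `(N + 2m)^d` cells:
those that remain after removing `m` layers of cells along the boundary. -/
def innerGrid (d m N : ℕ) : Finset (Zd d) := Fintype.piFinset fun _ => Finset.Ico (m : ℤ) (m + N)

lemma card_innerGrid (d m N : ℕ) : (innerGrid d m N).card = N ^ d := by
  simp [innerGrid]

lemma isInteriorPacking_innerGrid (hd : 0 < d) {E0 : Finset (Zd d)} {s : ℝ≥0} {m k : ℕ}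
    (hs : 2 * irange d E0 + s ≤ m * k) (N : ℕ) :
    IsInteriorPacking E0 s ((N + 2 * m) * k) k (innerGrid d m N) fun j => k • j := by
  refine ⟨fun j _ j' _ hne => disjoint_smul_vadd_latticeCube hne, fun z hz => ?_⟩
  obtain ⟨j, hj, hzj⟩ := Finset.mem_biUnion.1 hz
  refine hs.trans (le_infDist_compl_cube hd fun i => ?_)
  have hji : (m : ℤ) ≤ j i ∧ j i < m + N := by
    simpa using Fintype.mem_piFinset.1 hj i
  have hzi := mem_latticeCube.1 (mem_vadd_latticeCube.1 hzj) i
  simp only [Pi.sub_apply, nsmul_eq_mul, Pi.mul_apply, Pi.natCast_apply] at hzi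
  have hlow : (m : ℤ) * k ≤ z i := by nlinarith
  have hupp : z i + m * k ≤ (N + 2 * m) * k := by nlinarith
  exact ⟨by simpa using mod_cast hlow, by simpa using mod_cast hupp⟩

end Packing

section Competitor

/-- `φ` is an admissible perturbation in the definition of `m_F(·; [0,k)^d)`: it vanishes within
distance `R` of the complement of the cube. -/
def IsCompetitor (E0 : Finset (Zd d)) (k : ℕ) (φ : Zd d → Rn n) : Prop :=
  ∀ z, infDist (toRd z) (cube d k)ᶜ ≤ irange d E0 → φ z = 0

lemma isCompetitor_zero (E0 : Finset (Zd d)) (k : ℕ) :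
    IsCompetitor E0 k (0 : Zd d → Rn n) :=
  fun _ _ => rfl

instance (E0 : Finset (Zd d)) (k : ℕ) : Nonempty {φ : Zd d → Rn n // IsCompetitor E0 k φ} :=
  ⟨⟨0, isCompetitor_zero E0 k⟩⟩

lemma IsCompetitor.add_eq_zero {E0 : Finset (Zd d)} {k : ℕ} {φ : Zd d → Rn n}
    (hφ : IsCompetitor E0 k φ) {z w : Zd d} (hz : z ∉ latticeCube d k)
    (hw : ‖toRd w‖ ≤ irange d E0) : φ (z + w) = 0 := by
  refine hφ _ ((infDist_le_dist_of_mem (mt toRd_mem_cube.1 hz)).trans ?_)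
  rwa [dist_toRd_add]

variable {ι : Type*}

/-- The superposition of the perturbations `φ j`, each translated to its cell `c j + [0,k)^d`. -/
def glue (J : Finset ι) (c : ι → Zd d) (φ : ι → Zd d → Rn n) (z : Zd d) : Rn n :=
  ∑ j ∈ J, φ j (z - c j)

variable {E0 : Finset (Zd d)} {k : ℕ} {J : Finset ι} {c : ι → Zd d} {φ : ι → Zd d → Rn n}

lemma glue_add_of_mem (hJ : (J : Set ι).PairwiseDisjoint fun j => c j +ᵥ latticeCube d k)
    (hφ : ∀ j ∈ J, IsCompetitor E0 k (φ j)) {j : ι} (hj : j ∈ J) {y w : Zd d}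
    (hy : y ∈ latticeCube d k) (hw : ‖toRd w‖ ≤ irange d E0) :
    glue J c φ (c j + y + w) = φ j (y + w) := by
  rw [glue, Finset.sum_eq_single_of_mem j hj, add_assoc, add_sub_cancel_left]
  intro i hi hij
  rw [add_sub_right_comm]
  refine (hφ i hi).add_eq_zero (fun hyi => ?_) hw
  exact Finset.disjoint_left.1 (hJ hj hi hij.symm)
    (Finset.vadd_mem_vadd_finset hy) (mem_vadd_latticeCube.2 hyi)

lemma glue_add_of_notMem (hφ : ∀ j ∈ J, IsCompetitor E0 k (φ j)) {z w : Zd d}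
    (hz : z ∉ cells k J c) (hw : ‖toRd w‖ ≤ irange d E0) : glue J c φ (z + w) = 0 := by
  refine Finset.sum_eq_zero fun j hj => ?_
  rw [add_sub_right_comm]
  exact (hφ j hj).add_eq_zero
    (fun h => hz (Finset.mem_biUnion.2 ⟨j, hj, mem_vadd_latticeCube.2 h⟩)) hw

end Competitor

section Energy

/-- The difference quotient `∂_b u(z) = (u(z+b) - u(z)) / |b|`. -/
def diffQuot (b : Zd d) (u : Zd d → Rn n) (z : Zd d) : Rn n := ‖toRd b‖⁻¹ • (u (z + b) - u z)

lemma norm_diffQuot_le_iff {b : Zd d} (hb : b ≠ 0) {u : Zd d → Rn n} {z : Zd d} {M : ℝ} :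
    ‖diffQuot b u z‖ ≤ M ↔ ‖u (z + b) - u z‖ ≤ ‖toRd b‖ * M := by
  rw [diffQuot, norm_smul, norm_inv, norm_norm, inv_mul_le_iff₀ (norm_toRd_pos hb)]

/-- The contribution of the bonds `(z, z + b)`, `b ∈ ℰ₀`, to the energy. -/
def siteEnergy (τ : Zd d → Ω → Ω) (E0 : Finset (Zd d)) (V : Zd d → Ω → Rn n → ℝ) (ω : Ω)
    (u : Zd d → Rn n) (z : Zd d) : ℝ :=
  ∑ b ∈ E0, V b (τ z ω) (diffQuot b u z)

variable {τ : Zd d → Ω → Ω} {E0 : Finset (Zd d)} {V : Zd d → Ω → Rn n → ℝ}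

section Pointwise

omit [MeasurableSpace Ω]

lemma energy1_cube (ω : Ω) (u : Zd d → Rn n) (k : ℕ) :
    energy1 τ E0 V ω u (cube d k) = ∑ z ∈ latticeCube d k, siteEnergy τ E0 V ω u z := by
  rw [energy1, tsum_eq_sum (s := latticeCube d k) fun z hz => if_neg (mt toRd_mem_cube.1 hz)]
  exact Finset.sum_congr rfl fun z hz => if_pos (toRd_mem_cube.2 hz)

lemma siteEnergy_add (hτadd : ∀ x y : Zd d, τ (x + y) = τ x ∘ τ y) {ω : Ω} {u v : Zd d → Rn n}
    {c y : Zd d} (h : ∀ b ∈ E0, u (c + y + b) - u (c + y) = v (y + b) - v y) :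
    siteEnergy τ E0 V ω u (c + y) = siteEnergy τ E0 V (τ c ω) v y := by
  refine Finset.sum_congr rfl fun b hb => ?_
  rw [diffQuot, diffQuot, h b hb, add_comm c y, hτadd, Function.comp_apply]

/-- `G` bounds the energy of the bonds of a site whose difference quotients are at most `M`. -/
def IsSiteBound (E0 : Finset (Zd d)) (V : Zd d → Ω → Rn n → ℝ) (M : ℝ) (G : Ω → ℝ) : Prop :=
  ∀ (ω : Ω) (r : Zd d → Rn n), (∀ b ∈ E0, ‖r b‖ ≤ M) → ∑ b ∈ E0, V b ω (r b) ≤ G ω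

lemma isSiteBound_sum {M : ℝ} {g : Zd d → Ω → ℝ}
    (hg : ∀ b ∈ E0, ∀ (ω : Ω) (r : Rn n), ‖r‖ ≤ M → V b ω r ≤ g b ω) :
    IsSiteBound E0 V M fun ω => ∑ b ∈ E0, g b ω :=
  fun _ _ hr => Finset.sum_le_sum fun b hb => hg b hb _ _ (hr b hb)

lemma IsSiteBound.siteEnergy_le {M : ℝ} {G : Ω → ℝ} (hG : IsSiteBound E0 V M G) {ω : Ω}
    {u : Zd d → Rn n} {z : Zd d} (hu : ∀ b ∈ E0, ‖diffQuot b u z‖ ≤ M) :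
    siteEnergy τ E0 V ω u z ≤ G (τ z ω) :=
  hG _ _ hu

variable (hVnn : ∀ b ∈ E0, ∀ (ω : Ω) (r : Rn n), 0 ≤ V b ω r)

include hVnn

lemma energy1_cube_nonneg (ω : Ω) (u : Zd d → Rn n) (k : ℕ) :
    0 ≤ energy1 τ E0 V ω u (cube d k) := by
  rw [energy1_cube]
  exact Finset.sum_nonneg fun z _ => Finset.sum_nonneg fun b hb => hVnn b hb _ _

lemma mF_cube_nonneg (ω : Ω) (F : Rd d →L[ℝ] Rn n) (k : ℕ) : 0 ≤ mF τ E0 V ω F (cube d k) :=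
  Real.iInf_nonneg fun _ => energy1_cube_nonneg hVnn _ _ _

lemma mF_cube_le_energy1 (ω : Ω) (F : Rd d →L[ℝ] Rn n) {k : ℕ} {φ : Zd d → Rn n}
    (hφ : IsCompetitor E0 k φ) :
    mF τ E0 V ω F (cube d k) ≤ energy1 τ E0 V ω (fun z => F (toRd z) + φ z) (cube d k) :=
  ciInf_le (f := fun φ : {φ : Zd d → Rn n // IsCompetitor E0 k φ} =>
      energy1 τ E0 V ω (fun z => F (toRd z) + φ.1 z) (cube d k))
    ⟨0, forall_mem_range.2 fun _ => energy1_cube_nonneg hVnn _ _ _⟩ ⟨φ, hφ⟩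

end Pointwise

variable (hVnn : ∀ b ∈ E0, ∀ (ω : Ω) (r : Rn n), 0 ≤ V b ω r)

include hVnn

lemma W0_nonneg (P : Measure Ω) (F : Rd d →L[ℝ] Rn n) : 0 ≤ W0 P τ E0 V F :=
  Real.iInf_nonneg fun _ =>
    mul_nonneg (by positivity) (integral_nonneg fun _ => mF_cube_nonneg hVnn _ _ _)

lemma W0_le (P : Measure Ω) (F : Rd d →L[ℝ] Rn n) {k : ℕ} (hk : 0 < k) :
    W0 P τ E0 V F ≤ ((k : ℝ) ^ d)⁻¹ * ∫ ω, mF τ E0 V ω F (cube d k) ∂P :=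
  ciInf_le (f := fun k : {k : ℕ // 0 < k} =>
      (((k : ℕ) : ℝ) ^ d)⁻¹ * ∫ ω, mF τ E0 V ω F (cube d k) ∂P)
    ⟨0, forall_mem_range.2 fun _ =>
      mul_nonneg (by positivity) (integral_nonneg fun _ => mF_cube_nonneg hVnn _ _ _)⟩ ⟨k, hk⟩

end Energy

section Comparison

lemma le_sum_ciInf {ι κ : Type*} [Nonempty κ] {J : Finset ι} {f : ι → κ → ℝ} {a : ℝ}
    (h : ∀ x : ι → κ, a ≤ ∑ j ∈ J, f j (x j)) : a ≤ ∑ j ∈ J, ⨅ x, f j x := by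
  refine le_of_forall_pos_le_add fun ε hε => ?_
  have hex (j : ι) : ∃ x, f j x < (⨅ x, f j x) + ε / (J.card + 1) :=
    exists_lt_of_ciInf_lt (lt_add_of_pos_right _ (by positivity))
  choose x hx using hex
  calc a ≤ ∑ j ∈ J, f j (x j) := h x
    _ ≤ ∑ j ∈ J, ((⨅ x, f j x) + ε / (J.card + 1)) := Finset.sum_le_sum fun j _ => (hx j).le
    _ = ∑ j ∈ J, (⨅ x, f j x) + J.card / (J.card + 1) * ε := by
      rw [Finset.sum_add_distrib, Finset.sum_const, nsmul_eq_mul]; ring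
    _ ≤ ∑ j ∈ J, (⨅ x, f j x) + ε := by
      gcongr
      exact mul_le_of_le_one_left hε.le (div_le_one_of_le₀ (by linarith) (by positivity))

lemma exists_lipschitz_cutoff {X : Type*} [PseudoMetricSpace X] (A : Set X) (r : ℝ) {s : ℝ≥0}
    (hs : 0 < s) :
    ∃ η : X → ℝ, LipschitzWith s⁻¹ η ∧ (∀ x, η x ∈ Icc 0 1) ∧
      (∀ x, infDist x A ≤ r → η x = 0) ∧ ∀ x, r + s ≤ infDist x A → η x = 1 := by
  have hs' : (0 : ℝ) < s := hs
  set E : Set X := {x | r + s ≤ infDist x A}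
  refine ⟨fun x => thickenedIndicator hs' E x, ?_, fun x => ⟨NNReal.coe_nonneg _, ?_⟩, ?_, ?_⟩
  · have hlip := lipschitzWith_thickenedIndicator hs' E
    rw [Real.toNNReal_coe] at hlip
    exact LipschitzWith.of_dist_le_mul fun x y => hlip.dist_le_mul x y
  · exact_mod_cast thickenedIndicator_le_one hs' E x
  · intro x hx
    suffices x ∉ thickening s E by simp [thickenedIndicator_zero hs' E this]
    rintro hxE
    obtain ⟨y, hy, hxy⟩ := mem_thickening_iff.1 hxE
    have hyE : r + s ≤ infDist y A := hy
    linarith [infDist_le_infDist_add_dist (s := A) (x := y) (y := x), dist_comm x y]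
  · intro x hx
    simp [thickenedIndicator_one hs' E hx]

/-- The perturbation of the affine map `F` that turns it into `F'` plus `Φ` where the cut-off `η`
equals `1`. -/
def transition (η : Rd d → ℝ) (F F' : Rd d →L[ℝ] Rn n) (Φ : Zd d → Rn n) (z : Zd d) : Rn n :=
  η (toRd z) • (F' - F) (toRd z) + Φ z

variable {E0 : Finset (Zd d)} {η : Rd d → ℝ} {F F' : Rd d →L[ℝ] Rn n} {Φ : Zd d → Rn n}

lemma transition_sub_of_cutoff_eq_one {z b : Zd d} (hz : η (toRd z) = 1)
    (hzb : η (toRd (z + b)) = 1) :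
    (F (toRd (z + b)) + transition η F F' Φ (z + b)) - (F (toRd z) + transition η F F' Φ z) =
      F' (toRd b) + (Φ (z + b) - Φ z) := by
  simp only [transition, hz, hzb, one_smul]
  simp only [toRd_add, map_add, _root_.sub_apply]
  abel

lemma norm_diffQuot_transition_le {L : ℝ≥0} (hη : LipschitzWith L η) (hη01 : ∀ x, η x ∈ Icc 0 1)
    {z b : Zd d} (hb : b ≠ 0) (hz : Φ z = 0) (hzb : Φ (z + b) = 0) {D : ℝ} (hD : ‖toRd z‖ ≤ D) :
    ‖diffQuot b (fun z => F (toRd z) + transition η F F' Φ z) z‖ ≤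
      ‖F‖ + ‖F' - F‖ * (1 + L * D) := by
  set G := F' - F with hG
  have hsplit : (F (toRd (z + b)) + transition η F F' Φ (z + b)) -
      (F (toRd z) + transition η F F' Φ z) =
      F (toRd b) + η (toRd (z + b)) • G (toRd b) +
        (η (toRd (z + b)) - η (toRd z)) • G (toRd z) := by
    simp only [transition, ← hG, hz, hzb, toRd_add, map_add, smul_add, sub_smul]
    abel
  have hinterp : ‖η (toRd (z + b)) • G (toRd b)‖ ≤ ‖G‖ * ‖toRd b‖ := by
    rw [norm_smul, Real.norm_of_nonneg (hη01 _).1]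
    exact (mul_le_of_le_one_left (norm_nonneg _) (hη01 _).2).trans (G.le_opNorm _)
  have hcutoff : ‖(η (toRd (z + b)) - η (toRd z)) • G (toRd z)‖ ≤ L * ‖toRd b‖ * (‖G‖ * D) := by
    rw [norm_smul]
    gcongr
    · rw [← dist_eq_norm, ← dist_toRd_add z b]
      exact hη.dist_le_mul _ _
    · exact (G.le_opNorm _).trans (by gcongr)
  rw [norm_diffQuot_le_iff hb, hsplit]
  calc _ ≤ ‖F‖ * ‖toRd b‖ + ‖G‖ * ‖toRd b‖ + L * ‖toRd b‖ * (‖G‖ * D) :=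
        norm_add₃_le.trans (by gcongr; exact F.le_opNorm _)
    _ = ‖toRd b‖ * (‖F‖ + ‖G‖ * (1 + L * D)) := by ring

section Packing

omit [MeasurableSpace Ω]

variable (hE00 : (0 : Zd d) ∉ E0) {τ : Zd d → Ω → Ω} {V : Zd d → Ω → Rn n → ℝ}
  {ι : Type*} {s : ℝ≥0} {K k : ℕ} {J : Finset ι} {c : ι → Zd d} {φ : ι → Zd d → Rn n}

lemma IsInteriorPacking.isCompetitor_transition (hs : 0 < s) (hJ : IsInteriorPacking E0 s K k J c)
    (hφ : ∀ j ∈ J, IsCompetitor E0 k (φ j))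
    (hη0 : ∀ x, infDist x (cube d K)ᶜ ≤ irange d E0 → η x = 0) :
    IsCompetitor E0 K (transition η F F' (glue J c φ)) := by
  intro z hz
  have hzcells : z ∉ cells k J c := fun hzJ => hz.not_gt (hJ.irange_lt_infDist hs hzJ)
  have hglue : glue J c φ z = 0 := by
    simpa using glue_add_of_notMem hφ hzcells (norm_toRd_zero_le_irange E0)
  rw [transition, hη0 _ hz, hglue, zero_smul, add_zero]

lemma IsInteriorPacking.siteEnergy_transition_of_mem
    (hτadd : ∀ x y : Zd d, τ (x + y) = τ x ∘ τ y) (hJ : IsInteriorPacking E0 s K k J c)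
    (hφ : ∀ j ∈ J, IsCompetitor E0 k (φ j))
    (hη1 : ∀ x, irange d E0 + s ≤ infDist x (cube d K)ᶜ → η x = 1) (ω : Ω) {j : ι} (hj : j ∈ J)
    {y : Zd d} (hy : y ∈ latticeCube d k) :
    siteEnergy τ E0 V ω (fun z => F (toRd z) + transition η F F' (glue J c φ) z) (c j + y) =
      siteEnergy τ E0 V (τ (c j) ω) (fun z => F' (toRd z) + φ j z) y := by
  have hmem : c j + y ∈ cells k J c :=
    Finset.mem_biUnion.2 ⟨j, hj, Finset.vadd_mem_vadd_finset hy⟩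
  have hη {w : Zd d} (hw : ‖toRd w‖ ≤ irange d E0) : η (toRd (c j + y + w)) = 1 := by
    refine hη1 _ ?_
    have htri := infDist_le_infDist_add_dist (s := (cube d K)ᶜ) (x := toRd (c j + y))
      (y := toRd (c j + y + w))
    rw [dist_comm, dist_toRd_add] at htri
    linarith [hJ.le_infDist _ hmem]
  have hglue {w : Zd d} (hw : ‖toRd w‖ ≤ irange d E0) :
      glue J c φ (c j + y + w) = φ j (y + w) :=
    glue_add_of_mem hJ.pairwiseDisjoint hφ hj hy hw
  have h0 := norm_toRd_zero_le_irange E0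
  refine siteEnergy_add hτadd fun b hb => ?_
  have hbR := norm_toRd_le_irange hb
  rw [transition_sub_of_cutoff_eq_one (by simpa using hη h0) (hη hbR), hglue hbR,
    show glue J c φ (c j + y) = φ j y by simpa using hglue h0, toRd_add, map_add]
  abel

include hE00 in
lemma siteEnergy_transition_le_of_notMem {L : ℝ≥0} (hη : LipschitzWith L η)
    (hη01 : ∀ x, η x ∈ Icc 0 1) (hφ : ∀ j ∈ J, IsCompetitor E0 k (φ j)) {M : ℝ} {G : Ω → ℝ}
    (hG : IsSiteBound E0 V M G) (hM : ‖F‖ + ‖F' - F‖ * (1 + L * (√d * K)) ≤ M) (ω : Ω) {z : Zd d}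
    (hzK : z ∈ latticeCube d K) (hz : z ∉ cells k J c) :
    siteEnergy τ E0 V ω (fun z => F (toRd z) + transition η F F' (glue J c φ) z) z ≤
      G (τ z ω) := by
  refine hG.siteEnergy_le fun b hb => le_trans ?_ hM
  have hglue {w : Zd d} (hw : ‖toRd w‖ ≤ irange d E0) : glue J c φ (z + w) = 0 :=
    glue_add_of_notMem hφ hz hw
  exact norm_diffQuot_transition_le hη hη01 (ne_of_mem_of_not_mem hb hE00)
    (by simpa using hglue (norm_toRd_zero_le_irange E0)) (hglue (norm_toRd_le_irange hb))
    (norm_toRd_le_of_mem_latticeCube hzK)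

include hE00 in
theorem IsInteriorPacking.mF_le (hτadd : ∀ x y : Zd d, τ (x + y) = τ x ∘ τ y)
    (hVnn : ∀ b ∈ E0, ∀ (ω : Ω) (r : Rn n), 0 ≤ V b ω r) (hs : 0 < s)
    (hJ : IsInteriorPacking E0 s K k J c) {M : ℝ} {G : Ω → ℝ} (hG : IsSiteBound E0 V M G)
    (hM : ‖F‖ + ‖F' - F‖ * (1 + s⁻¹ * (√d * K)) ≤ M) (ω : Ω) :
    mF τ E0 V ω F (cube d K) ≤
      ∑ j ∈ J, mF τ E0 V (τ (c j) ω) F' (cube d k) +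
        ∑ z ∈ latticeCube d K \ cells k J c, G (τ z ω) := by
  obtain ⟨η, hη, hη01, hη0, hη1⟩ :=
    exists_lipschitz_cutoff (cube d K)ᶜ (irange d E0) hs
  rw [← sub_le_iff_le_add]
  refine le_sum_ciInf (κ := {φ : Zd d → Rn n // IsCompetitor E0 k φ}) fun φ => ?_
  have hφ : ∀ j ∈ J, IsCompetitor E0 k (φ j).1 := fun j _ => (φ j).2
  rw [sub_le_iff_le_add]
  set Φ := glue J c fun j => (φ j).1
  set u : Zd d → Rn n := fun z => F (toRd z) + transition η F F' Φ z
  calc mF τ E0 V ω F (cube d K) ≤ energy1 τ E0 V ω u (cube d K) :=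
        mF_cube_le_energy1 hVnn ω F (hJ.isCompetitor_transition hs hφ hη0)
    _ = ∑ j ∈ J, ∑ y ∈ latticeCube d k, siteEnergy τ E0 V ω u (c j + y) +
          ∑ z ∈ latticeCube d K \ cells k J c, siteEnergy τ E0 V ω u z := by
      rw [energy1_cube, ← sum_cells hJ.pairwiseDisjoint, add_comm,
        Finset.sum_sdiff (hJ.cells_subset hs)]
    _ ≤ _ := by
      refine add_le_add (Finset.sum_le_sum fun j hj => ?_) (Finset.sum_le_sum fun z hz => ?_)
      · rw [energy1_cube]
        exact (Finset.sum_congr rfl fun y hy =>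
          hJ.siteEnergy_transition_of_mem hτadd hφ hη1 ω hj hy).le
      · obtain ⟨hzK, hzJ⟩ := Finset.mem_sdiff.1 hz
        exact siteEnergy_transition_le_of_notMem hE00 hη hη01 hφ hG (mod_cast hM) ω hzK hzJ

end Packing

end Comparison

section Integrability

lemma integral_comp_measurePreserving {α β E : Type*} [MeasurableSpace α] [MeasurableSpace β]
    [NormedAddCommGroup E] [NormedSpace ℝ E] {μ : Measure α} {ν : Measure β} {T : α → β}
    (hT : MeasurePreserving T μ ν) {f : β → E} (hf : AEStronglyMeasurable f ν) :
    ∫ x, f (T x) ∂μ = ∫ y, f y ∂ν := by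
  rw [← hT.map_eq] at hf ⊢
  exact (integral_map hT.measurable.aemeasurable hf).symm

lemma measurable_iInf_of_continuous {α X : Type*} [MeasurableSpace α] [TopologicalSpace X]
    [TopologicalSpace.SeparableSpace X] {f : α → X → ℝ} (hmeas : ∀ x, Measurable fun a => f a x)
    (hcont : ∀ a, Continuous (f a)) : Measurable fun a => ⨅ x, f a x := by
  obtain ⟨S, hS, hdense⟩ := TopologicalSpace.exists_countable_dense X
  have := hS.to_subtype
  simp_rw [← fun a => hdense.ciInf' (hcont a)]
  exact .iInf fun x => hmeas x

variable {P : Measure Ω} {τ : Zd d → Ω → Ω} {E0 : Finset (Zd d)} {V : Zd d → Ω → Rn n → ℝ}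

omit [MeasurableSpace Ω] in
lemma continuous_energy1_cube (hVcont : ∀ b ∈ E0, ∀ ω : Ω, Continuous (V b ω)) (ω : Ω) (k : ℕ) :
    Continuous fun u => energy1 τ E0 V ω u (cube d k) := by
  simp only [energy1_cube, siteEnergy, diffQuot]
  exact continuous_finsetSum _ fun z _ => continuous_finsetSum _ fun b hb =>
    (hVcont b hb _).comp (by fun_prop)

lemma measurable_mF_cube (hτ : ∀ z, Measurable (τ z))
    (hVmeas : ∀ b ∈ E0, Measurable fun q : Ω × Rn n => V b q.1 q.2)
    (hVcont : ∀ b ∈ E0, ∀ ω : Ω, Continuous (V b ω)) (F : Rd d →L[ℝ] Rn n) (k : ℕ) :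
    Measurable fun ω => mF τ E0 V ω F (cube d k) := by
  have : SecondCountableTopology {φ : Zd d → Rn n // IsCompetitor E0 k φ} :=
    TopologicalSpace.Subtype.secondCountableTopology _
  refine measurable_iInf_of_continuous (X := {φ // IsCompetitor E0 k φ}) (fun φ => ?_) fun ω => ?_
  · simp only [energy1_cube, siteEnergy]
    exact Finset.measurable_fun_sum _ fun z _ => Finset.measurable_fun_sum _ fun b hb =>
      (hVmeas b hb).comp ((hτ z).prodMk measurable_const)
  · have hcont : Continuous fun (φ : Zd d → Rn n) z => F (toRd z) + φ z := by fun_prop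
    exact ((continuous_energy1_cube (τ := τ) hVcont ω k).comp hcont).comp
      (continuous_subtype_val (p := IsCompetitor E0 k))

variable (hE00 : (0 : Zd d) ∉ E0) (hτadd : ∀ x y : Zd d, τ (x + y) = τ x ∘ τ y)
  (hτmp : ∀ z : Zd d, MeasurePreserving (τ z) P P)
  (hVmeas : ∀ b ∈ E0, Measurable fun q : Ω × Rn n => V b q.1 q.2)
  (hVcont : ∀ b ∈ E0, ∀ ω : Ω, Continuous (V b ω))
  (hVnn : ∀ b ∈ E0, ∀ (ω : Ω) (r : Rn n), 0 ≤ V b ω r)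
  {M : ℝ} {G : Ω → ℝ} (hG : IsSiteBound E0 V M G) (hGint : Integrable G P)

include hE00 hτadd hτmp hVmeas hVcont hVnn hG hGint

lemma integrable_mF_cube {F : Rd d →L[ℝ] Rn n} (hF : ‖F‖ ≤ M) (k : ℕ) :
    Integrable (fun ω => mF τ E0 V ω F (cube d k)) P := by
  have hempty : IsInteriorPacking E0 1 k 0 (∅ : Finset Empty) fun _ => 0 :=
    ⟨by simp, by simp [cells]⟩
  refine .mono' (integrable_finsetSum (latticeCube d k) fun z _ =>
    (hτmp z).integrable_comp_of_integrable hGint)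
    (measurable_mF_cube (fun z => (hτmp z).measurable) hVmeas hVcont F k).aestronglyMeasurable
    (.of_forall fun ω => ?_)
  rw [Real.norm_of_nonneg (mF_cube_nonneg hVnn ω F k)]
  simpa [cells] using hempty.mF_le hE00 hτadd hVnn one_pos hG (F := F) (F' := F) (by simpa) ω

theorem IsInteriorPacking.integral_mF_le {ι : Type*} {s : ℝ≥0} {K k : ℕ} {J : Finset ι}
    {c : ι → Zd d} (hs : 0 < s) (hJ : IsInteriorPacking E0 s K k J c) {F F' : Rd d →L[ℝ] Rn n}
    (hM : ‖F‖ + ‖F' - F‖ * (1 + s⁻¹ * (√d * K)) ≤ M) :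
    ∫ ω, mF τ E0 V ω F (cube d K) ∂P ≤
      J.card * ∫ ω, mF τ E0 V ω F' (cube d k) ∂P +
        ((K : ℝ) ^ d - J.card * (k : ℝ) ^ d) * ∫ ω, G ω ∂P := by
  have hF' : ‖F'‖ ≤ M := by
    refine le_trans ?_ hM
    calc ‖F'‖ ≤ ‖F‖ + ‖F' - F‖ := norm_le_norm_add_norm_sub' _ _
      _ ≤ _ := by
        gcongr
        exact le_mul_of_one_le_right (norm_nonneg _) (le_add_of_nonneg_right (by positivity))
  have hint := integrable_mF_cube hE00 hτadd hτmp hVmeas hVcont hVnn hG hGint hF' k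
  have hcells : Integrable (fun ω => ∑ j ∈ J, mF τ E0 V (τ (c j) ω) F' (cube d k)) P :=
    integrable_finsetSum J fun j _ => (hτmp (c j)).integrable_comp_of_integrable hint
  have hshell : Integrable (fun ω => ∑ z ∈ latticeCube d K \ cells k J c, G (τ z ω)) P :=
    integrable_finsetSum _ fun z _ => (hτmp z).integrable_comp_of_integrable hGint
  have hcard : ((latticeCube d K \ cells k J c).card : ℝ) = (K : ℝ) ^ d - J.card * (k : ℝ) ^ d := by
    rw [Finset.cast_card_sdiff (hJ.cells_subset hs), card_latticeCube,
      card_cells hJ.pairwiseDisjoint]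
    push_cast; rfl
  calc ∫ ω, mF τ E0 V ω F (cube d K) ∂P
    _ ≤ ∫ ω, (∑ j ∈ J, mF τ E0 V (τ (c j) ω) F' (cube d k) +
          ∑ z ∈ latticeCube d K \ cells k J c, G (τ z ω)) ∂P :=
      integral_mono_of_nonneg (.of_forall fun ω => mF_cube_nonneg hVnn ω F K) (hcells.add hshell)
        (.of_forall fun ω => hJ.mF_le hE00 hτadd hVnn hs hG hM ω)
    _ = ∑ j ∈ J, ∫ ω, mF τ E0 V (τ (c j) ω) F' (cube d k) ∂P +
          ∑ z ∈ latticeCube d K \ cells k J c, ∫ ω, G (τ z ω) ∂P := by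
      rw [integral_add hcells hshell, integral_finsetSum, integral_finsetSum]
      · exact fun z _ => (hτmp z).integrable_comp_of_integrable hGint
      · exact fun j _ => (hτmp (c j)).integrable_comp_of_integrable hint
    _ = _ := by
      simp only [integral_comp_measurePreserving (hτmp _) hGint.aestronglyMeasurable,
        fun j => integral_comp_measurePreserving (hτmp (c j)) hint.aestronglyMeasurable,
        Finset.sum_const, nsmul_eq_mul, hcard]

theorem IsInteriorPacking.W0_le {ι : Type*} {s : ℝ≥0} {K k : ℕ} {J : Finset ι} {c : ι → Zd d}
    (hs : 0 < s) (hk : 0 < k) (hK : 0 < K) (hJ : IsInteriorPacking E0 s K k J c)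
    {F F' : Rd d →L[ℝ] Rn n} (hM : ‖F‖ + ‖F' - F‖ * (1 + s⁻¹ * (√d * K)) ≤ M) {θ : ℝ}
    (hθ : J.card * (k : ℝ) ^ d = θ * (K : ℝ) ^ d) :
    W0 P τ E0 V F ≤
      θ * (((k : ℝ) ^ d)⁻¹ * ∫ ω, mF τ E0 V ω F' (cube d k) ∂P) + (1 - θ) * ∫ ω, G ω ∂P := by
  have hkd : (0 : ℝ) < (k : ℝ) ^ d := by positivity
  have hKd : (0 : ℝ) < (K : ℝ) ^ d := by positivity
  have hcard : (J.card : ℝ) = θ * (K : ℝ) ^ d * ((k : ℝ) ^ d)⁻¹ := by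
    rw [← hθ, mul_inv_cancel_right₀ hkd.ne']
  refine (StochHom.W0_le hVnn P F hK).trans ((inv_mul_le_iff₀ hKd).2 ?_)
  refine (hJ.integral_mF_le hE00 hτadd hτmp hVmeas hVcont hVnn hG hGint hs hM).trans_eq ?_
  rw [hθ, hcard]
  ring

theorem W0_le_add (hd : 0 < d) {F F' : Rd d →L[ℝ] Rn n} (t : ℕ)
    (hM : ‖F‖ + ‖F' - F‖ * (1 + √d * (t + 4)) ≤ M) :
    W0 P τ E0 V F ≤ W0 P τ E0 V F' + (1 - (t / (t + 4) : ℝ) ^ d) * ∫ ω, G ω ∂P := by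
  have : Nonempty {k : ℕ // 0 < k} := ⟨⟨1, one_pos⟩⟩
  rw [← sub_le_iff_le_add]
  refine le_ciInf fun k => ?_
  obtain ⟨k, hk⟩ := k
  rw [sub_le_iff_le_add]
  obtain ⟨m, hm1R⟩ := exists_nat_ge (max 1 (2 * irange d E0))
  obtain ⟨hm1, hmR⟩ := max_le_iff.1 hm1R
  have hm : 0 < m := by exact_mod_cast hm1
  set s : ℝ≥0 := m * k
  have hs : 0 < s := by positivity
  have hmargin : 2 * irange d E0 + s ≤ (2 * m : ℕ) * k := by
    have hk1 : (1 : ℝ) ≤ k := by exact_mod_cast hk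
    have : (m : ℝ) ≤ m * k := le_mul_of_one_le_right m.cast_nonneg hk1
    push_cast [s]
    linarith
  have hK : (((t * m + 2 * (2 * m)) * k : ℕ) : ℝ) = (t + 4) * s := by push_cast [s]; ring
  have hratio : (s : ℝ)⁻¹ * (√d * ((t + 4) * s)) = √d * (t + 4) := by
    field_simp
  have hθ : ((innerGrid d (2 * m) (t * m)).card : ℝ) * (k : ℝ) ^ d =
      (t / (t + 4) : ℝ) ^ d * (((t * m + 2 * (2 * m)) * k : ℕ) : ℝ) ^ d := by
    rw [card_innerGrid, hK, Nat.cast_pow, ← mul_pow, ← mul_pow]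
    push_cast [s]
    field_simp
  have hest := (isInteriorPacking_innerGrid hd hmargin (t * m)).W0_le hE00 hτadd hτmp hVmeas hVcont
    hVnn hG hGint hs hk (by positivity) (F := F) (F' := F') (by rwa [hK, NNReal.coe_inv, hratio]) hθ
  refine hest.trans (add_le_add_left (mul_le_of_le_one_left ?_ ?_) _)
  · exact mul_nonneg (by positivity) (integral_nonneg fun ω => mF_cube_nonneg hVnn ω F' k)
  · exact pow_le_one₀ (by positivity) (div_le_one_of_le₀ (by linarith) (by positivity))

end Integrability

section Continuity

variable {P : Measure Ω} {E0 : Finset (Zd d)} {V : Zd d → Ω → Rn n → ℝ}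

lemma exists_integrable_isSiteBound
    (hVdom : ∀ b ∈ E0, ∀ M : ℝ, ∃ g : Ω → ℝ, Integrable g P ∧
      ∀ (ω : Ω) (r : Rn n), ‖r‖ ≤ M → V b ω r ≤ g ω) (M : ℝ) :
    ∃ G : Ω → ℝ, Integrable G P ∧ IsSiteBound E0 V M G := by
  choose! g hgint hg using fun b hb => hVdom b hb M
  exact ⟨_, integrable_finsetSum E0 hgint, isSiteBound_sum hg⟩

lemma exists_one_sub_div_pow_mul_lt (d : ℕ) (C : ℝ) {ε : ℝ} (hε : 0 < ε) :
    ∃ t : ℕ, (1 - (t / (t + 4) : ℝ) ^ d) * C < ε := by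
  have hlim : Tendsto (fun t : ℕ => (1 - (t / (t + 4) : ℝ) ^ d) * C) atTop (𝓝 0) := by
    simpa using (((tendsto_natCast_div_add_atTop (4 : ℝ)).pow d).const_sub 1).mul_const C
  exact (hlim.eventually_lt_const hε).exists

theorem continuity_W0_general (P : Measure Ω) {τ : Zd d → Ω → Ω}
    (hτadd : ∀ x y : Zd d, τ (x + y) = τ x ∘ τ y)
    (hτmp : ∀ z : Zd d, MeasurePreserving (τ z) P P)
    {E0 : Finset (Zd d)} (hE00 : (0 : Zd d) ∉ E0)
    {V : Zd d → Ω → Rn n → ℝ}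
    (hVmeas : ∀ b ∈ E0, Measurable fun q : Ω × Rn n => V b q.1 q.2)
    (hVcont : ∀ b ∈ E0, ∀ ω : Ω, Continuous (V b ω))
    (hVnn : ∀ b ∈ E0, ∀ (ω : Ω) (r : Rn n), 0 ≤ V b ω r)
    (hVdom : ∀ b ∈ E0, ∀ M : ℝ, ∃ g : Ω → ℝ, Integrable g P ∧
      ∀ (ω : Ω) (r : Rn n), ‖r‖ ≤ M → V b ω r ≤ g ω) :
    (∀ F : Rd d →L[ℝ] Rn n, 0 ≤ W0 P τ E0 V F) ∧
      Continuous (fun F : Rd d →L[ℝ] Rn n => W0 P τ E0 V F) := by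
  refine ⟨W0_nonneg hVnn P, continuous_iff_continuousAt.2 fun F₀ =>
    Metric.tendsto_nhds.2 fun ε hε => ?_⟩
  rcases d.eq_zero_or_pos with rfl | hd
  · exact .of_forall fun F => by rwa [Subsingleton.elim F F₀, dist_self]
  obtain ⟨G, hGint, hG⟩ := exists_integrable_isSiteBound hVdom (‖F₀‖ + 1)
  obtain ⟨t, ht⟩ := exists_one_sub_div_pow_mul_lt d (∫ ω, G ω ∂P) hε
  have hle {F F' : Rd d →L[ℝ] Rn n} (h : ‖F‖ + ‖F' - F‖ * (1 + √d * (t + 4)) < ‖F₀‖ + 1) :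
      W0 P τ E0 V F < W0 P τ E0 V F' + ε :=
    (W0_le_add hE00 hτadd hτmp hVmeas hVcont hVnn hG hGint hd t h.le).trans_lt (by gcongr)
  have hfrom : ∀ᶠ F in 𝓝 F₀, ‖F‖ + ‖F₀ - F‖ * (1 + √d * (t + 4)) < ‖F₀‖ + 1 :=
    ContinuousAt.eventually_lt (by fun_prop) continuousAt_const (by simp)
  have hto : ∀ᶠ F in 𝓝 F₀, ‖F₀‖ + ‖F - F₀‖ * (1 + √d * (t + 4)) < ‖F₀‖ + 1 :=
    ContinuousAt.eventually_lt (by fun_prop) continuousAt_const (by simp)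
  filter_upwards [hfrom, hto] with F hF hF₀
  rw [Real.dist_eq, abs_sub_lt_iff]
  exact ⟨sub_lt_iff_lt_add'.2 (hle hF), sub_lt_iff_lt_add'.2 (hle hF₀)⟩

end Continuity

section Growth

variable {P : Measure Ω} [IsFiniteMeasure P]

lemma integrable_of_lintegral_rpow_lt_top {f : Ω → ℝ} (hf : AEStronglyMeasurable f P)
    (hf0 : ∀ ω, 0 ≤ f ω) {α : ℝ} (hα : 1 ≤ α) (h : ∫⁻ ω, ENNReal.ofReal (f ω ^ α) ∂P < ⊤) :
    Integrable f P := by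
  have hα0 : 0 < α := one_pos.trans_le hα
  have hLp : MemLp f (ENNReal.ofReal α) P := by
    refine ⟨hf, (eLpNorm_lt_top_iff_lintegral_rpow_enorm_lt_top (by simpa) (by simp)).2 ?_⟩
    simpa [ENNReal.toReal_ofReal hα0.le, Real.enorm_of_nonneg, hf0,
      ENNReal.ofReal_rpow_of_nonneg, hα0.le] using h
  exact hLp.integrable (by simpa)

lemma exists_integrable_bound_of_growth {p c : ℝ} (hp : 0 ≤ p) (hc : 0 ≤ c) {v : Ω → Rn n → ℝ}
    {l : Ω → ℝ} (hl : Integrable l P) (hl0 : ∀ ω, 0 ≤ l ω)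
    (hv : ∀ ω r, v ω r ≤ c * (1 + l ω * (‖r‖ ^ p + 1))) (M : ℝ) :
    ∃ g : Ω → ℝ, Integrable g P ∧ ∀ (ω : Ω) (r : Rn n), ‖r‖ ≤ M → v ω r ≤ g ω := by
  refine ⟨fun ω => c * (1 + l ω * (M ^ p + 1)),
    ((integrable_const 1).add (hl.mul_const _)).const_mul c, fun ω r hr => (hv ω r).trans ?_⟩
  have hlω := hl0 ω
  dsimp only
  gcongr

end Growth

/-- continuity of the homogenized energy density,
Proposition 3.9 of the paper. -/
theorem continuity_W0
    {d n : ℕ} (hd : 2 ≤ d) (hn : 1 ≤ n)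
    {Ω : Type*} [MeasurableSpace Ω] (P : Measure Ω) [IsProbabilityMeasure P]
    (τ : Zd d → Ω → Ω) (hτ0 : τ 0 = id)
    (hτadd : ∀ x y : Zd d, τ (x + y) = τ x ∘ τ y)
    (hτmp : ∀ z : Zd d, MeasurePreserving (τ z) P P)
    (hτerg : ∀ B : Set Ω, MeasurableSet B → (∀ z : Zd d, τ z ⁻¹' B = B) → P B = 0 ∨ P B = 1)
    (E0 : Finset (Zd d)) (hE00 : (0 : Zd d) ∉ E0) (hE0b : ∀ i : Fin d, stdb i ∈ E0)
    (p c₁ : ℝ) (hp : 1 < p) (hc₁ : 0 < c₁)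
    (V : Zd d → Ω → Rn n → ℝ)
    (hVmeas : ∀ b ∈ E0, Measurable fun q : Ω × Rn n => V b q.1 q.2)
    (hVcont : ∀ b ∈ E0, ∀ ω : Ω, Continuous (V b ω))
    (hVnn : ∀ b ∈ E0, ∀ (ω : Ω) (r : Rn n), 0 ≤ V b ω r)
    (lam : Zd d → Ω → ℝ)
    (hlammeas : ∀ b ∈ E0, Measurable (lam b))
    (hlamnn : ∀ b ∈ E0, ∀ ω : Ω, 0 ≤ lam b ω)
    (hgrowth : ∀ b ∈ E0, ∀ (ω : Ω) (r : Rn n),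
      lam b ω * (‖r‖ ^ p / c₁ - c₁) ≤ V b ω r ∧ V b ω r ≤ c₁ * (1 + lam b ω * (‖r‖ ^ p + 1)))
    (α β : ℝ) (hα : 1 ≤ α) (hβ : 1 / (p - 1) ≤ β)
    (hmomα : ∀ b ∈ E0, ∫⁻ ω, ENNReal.ofReal (lam b ω ^ α) ∂P < ⊤)
    (hmomβ : ∀ i : Fin d, ∫⁻ ω, ENNReal.ofReal (lam (stdb i) ω) ^ (-β) ∂P < ⊤)
    (h2T : (1 < α ∧ 1 / α + 1 / β ≤ p / (d : ℝ)) ∨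
      (n = 1 ∧ ∃ q c₂ : ℝ, 1 < q ∧ q < p ∧ ∃ f : Zd d → Ω → Rn n → ℝ,
        ∀ b ∈ E0, ∀ ω : Ω,
          (∀ r : Rn n, 0 ≤ f b ω r) ∧
          ConvexOn ℝ Set.univ (fun r : Rn n => V b ω r + f b ω r) ∧
          (∀ r : Rn n, f b ω r ≤ c₂ * (1 + lam b ω * (‖r‖ ^ q + 1)))))
    : (∀ F : Rd d →L[ℝ] Rn n, 0 ≤ W0 P τ E0 V F) ∧
      Continuous (fun F : Rd d →L[ℝ] Rn n => W0 P τ E0 V F) :=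
  continuity_W0_general P hτadd hτmp hE00 hVmeas hVcont hVnn fun b hb =>
    exists_integrable_bound_of_growth (zero_le_one.trans hp.le) hc₁.le
      (integrable_of_lintegral_rpow_lt_top (hlammeas b hb).aestronglyMeasurable (hlamnn b hb) hα
        (hmomα b hb)) (hlamnn b hb) fun ω r => (hgrowth b hb ω r).2

end StochHom
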